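/- Let n ≥ 1, c_u ∈ (0,1), C_u ∈ (1,∞), and let U ⊊ ℝⁿ be an unbounded (c_u,C_u)-uniform domain with nonempty boundary. Let h : closure(U) → ℝ be continuous, positive and harmonic on U, and identically 0 on ∂U. Then there exists a constant D ∈ (0,∞), depending only on n, c_u and C_u, such that for every x ∈ U and every r > 0, ∫_{B_U(x,2r)} h² dλ ≤ D · ∫_{B_U(x,r)} h² dλ, where λ is Lebesgue measure and B_U(x,r) = {y ∈ U : d_U(x,y) < r}. -/

import Mathlib

open Set Metric MeasureTheory ENNReal

noncomputable section

abbrev En (n : ℕ) := EuclideanSpace ℝ (Fin n)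

/-- The length of the curve `γ : [0,1] → X`, defined as the supremum of sums
`∑ d(γ(t_i), γ(t_{i-1}))` over partitions `0 ≤ t₀ < … < t_k ≤ 1`. -/
def curveLength {X : Type*} [PseudoEMetricSpace X] (γ : ℝ → X) : ℝ≥0∞ :=
  eVariationOn γ (Set.Icc 0 1)

/-- `γ` is a continuous curve in `Ω` from `x` to `y`. -/
def IsCurveIn {X : Type*} [PseudoEMetricSpace X] (Ω : Set X) (x y : X) (γ : ℝ → X) : Prop :=
  ContinuousOn γ (Set.Icc 0 1) ∧ Set.MapsTo γ (Set.Icc 0 1) Ω ∧ γ 0 = x ∧ γ 1 = y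

/-- The inner (pseudo)metric of `Ω`: the infimum of lengths of continuous curves
joining `x` to `y` inside `Ω`. -/
def innerDist {X : Type*} [PseudoEMetricSpace X] (Ω : Set X) (x y : X) : ℝ≥0∞ :=
  ⨅ (γ : ℝ → X) (_ : IsCurveIn Ω x y γ), curveLength γ

/-- `U` is a `(c,C)`-uniform domain in `ℝⁿ`. -/
def IsUniformDomain {n : ℕ} (c C : ℝ) (U : Set (En n)) : Prop :=
  IsOpen U ∧ IsConnected U ∧
    ∀ x ∈ U, ∀ y ∈ U, ∃ γ : ℝ → En n, IsCurveIn U x y γ ∧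
      curveLength γ ≤ ENNReal.ofReal (C * dist x y) ∧
      ∀ t ∈ Set.Icc (0:ℝ) 1,
        c * min (dist x (γ t)) (dist (γ t) y) ≤ Metric.infDist (γ t) (frontier U)

/-- The Laplacian `∑ ∂²f/∂xᵢ²` of `f : ℝⁿ → ℝ`. -/
def lap {n : ℕ} (f : En n → ℝ) (x : En n) : ℝ :=
  ∑ i : Fin n,
    fderiv ℝ (fun y => fderiv ℝ f y (EuclideanSpace.single i 1)) x (EuclideanSpace.single i 1)

/-- `f` is harmonic on the open set `V`: twice continuously differentiable with
vanishing Laplacian. -/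
def IsHarmonicOn {n : ℕ} (f : En n → ℝ) (V : Set (En n)) : Prop :=
  ContDiffOn ℝ 2 f V ∧ ∀ x ∈ V, lap f x = 0

/-! ### Truncated powers and the radial kernels -/

lemma hasDerivAt_pp (k : ℕ) (t : ℝ) :
    HasDerivAt (fun t : ℝ => (max t 0) ^ (k + 2)) (((k : ℝ) + 2) * (max t 0) ^ (k + 1)) t := by
  rcases lt_trichotomy t 0 with ht | ht | ht
  · have : (fun t : ℝ => (max t 0) ^ (k + 2)) =ᶠ[nhds t] fun _ => 0 := by
      filter_upwards [Iio_mem_nhds ht] with s hs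
      rw [max_eq_right (le_of_lt hs)]; simp
    rw [max_eq_right ht.le]
    simpa using (hasDerivAt_const t (0:ℝ)).congr_of_eventuallyEq this
  · subst ht
    simp only [max_self, ne_eq, Nat.add_eq_zero_iff, one_ne_zero, and_false, not_false_eq_true,
      zero_pow, mul_zero]
    rw [hasDerivAt_iff_isLittleO]
    simp only [max_self, sub_zero, smul_zero]
    have h1 : (fun t : ℝ => (max t 0) ^ (k + 2)) =O[nhds 0] fun t : ℝ => t ^ (k + 2) := by
      refine Asymptotics.isBigO_of_le (nhds (0:ℝ)) fun s => ?_
      rw [norm_pow, norm_pow]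
      apply pow_le_pow_left₀ (norm_nonneg _)
      rw [Real.norm_eq_abs, Real.norm_eq_abs, abs_of_nonneg (le_max_right _ _)]
      exact max_le (le_abs_self _) (abs_nonneg _)
    have h2 := Asymptotics.isLittleO_pow_pow (𝕜 := ℝ) (m := 1) (n := k + 2) (by omega)
    have h3 := h1.trans_isLittleO h2
    simpa using h3
  · have : (fun t : ℝ => (max t 0) ^ (k + 2)) =ᶠ[nhds t] fun t => t ^ (k + 2) := by
      filter_upwards [Ioi_mem_nhds ht] with s hs
      rw [max_eq_left (le_of_lt hs)]
    rw [max_eq_left ht.le]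
    have h2 := (hasDerivAt_pow (k + 2) t).congr_of_eventuallyEq this
    simpa using h2

lemma contDiff_pp3 : ContDiff ℝ 2 (fun t : ℝ => (max t 0) ^ 3) := by
  have h1 : ContDiff ℝ 1 (fun t : ℝ => (max t 0) ^ 2) := by
    rw [contDiff_one_iff_deriv]
    refine ⟨fun t => (hasDerivAt_pp 0 t).differentiableAt, ?_⟩
    have : deriv (fun t : ℝ => (max t 0) ^ 2) = fun t => 2 * max t 0 := by
      ext t; rw [(hasDerivAt_pp 0 t).deriv]; simp
    rw [this]; fun_prop
  have : (2 : WithTop ℕ∞) = 1 + 1 := by norm_num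
  rw [this, contDiff_succ_iff_deriv]
  refine ⟨fun t => (hasDerivAt_pp 1 t).differentiableAt, by simp, ?_⟩
  have : deriv (fun t : ℝ => (max t 0) ^ 3) = fun t => 3 * (max t 0) ^ 2 := by
    ext t; rw [(hasDerivAt_pp 1 t).deriv]; norm_num
  rw [this]; exact contDiff_const.mul h1

def eta {n : ℕ} (w : En n) : ℝ := (max (1 - ‖w‖ ^ 2) 0) ^ 2
def zet {n : ℕ} (w : En n) : ℝ := (max (1 - ‖w‖ ^ 2) 0) ^ 3

lemma eta_nonneg {n : ℕ} (w : En n) : 0 ≤ eta w := by unfold eta; positivity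
lemma zet_nonneg {n : ℕ} (w : En n) : 0 ≤ zet w := by unfold zet; positivity
lemma eta_zero {n : ℕ} {w : En n} (hw : 1 ≤ ‖w‖) : eta w = 0 := by
  unfold eta; rw [max_eq_right (by nlinarith)]; simp
lemma zet_zero {n : ℕ} {w : En n} (hw : 1 ≤ ‖w‖) : zet w = 0 := by
  unfold zet; rw [max_eq_right (by nlinarith)]; simp
lemma eta_le_one {n : ℕ} (w : En n) : eta w ≤ 1 := by
  unfold eta
  apply pow_le_one₀ (le_max_right _ _)
  apply max_le _ zero_le_one
  nlinarith [norm_nonneg w]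
lemma le_eta {n : ℕ} {w : En n} {a : ℝ} (ha : 0 ≤ a) (ha1 : a ≤ 1) (hw : ‖w‖ ≤ a) :
    (1 - a ^ 2) ^ 2 ≤ eta w := by
  unfold eta
  apply pow_le_pow_left₀ (by nlinarith)
  apply le_max_of_le_left
  nlinarith [norm_nonneg w]
lemma eta_cont {n : ℕ} : Continuous (eta (n := n)) := by unfold eta; fun_prop
lemma zet_cont {n : ℕ} : Continuous (zet (n := n)) := by unfold zet; fun_prop
lemma eta_supp {n : ℕ} : HasCompactSupport (eta (n := n)) :=
  HasCompactSupport.intro (isCompact_closedBall (0 : En n) 1) fun w hw => eta_zero (by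
    simp at hw; exact hw.le)
lemma zet_supp {n : ℕ} : HasCompactSupport (zet (n := n)) :=
  HasCompactSupport.intro (isCompact_closedBall (0 : En n) 1) fun w hw => zet_zero (by
    simp at hw; exact hw.le)
lemma zet_diff {n : ℕ} (w : En n) :
    HasFDerivAt (zet (n := n)) ((-6 * eta w) • (innerSL ℝ w)) w := by
  have h1 : HasFDerivAt (fun w : En n => 1 - ‖w‖ ^ 2) (-(2 • innerSL ℝ w)) w :=
    ((hasStrictFDerivAt_norm_sq w).hasFDerivAt).const_sub 1
  have h2 := (hasDerivAt_pp 1 (1 - ‖w‖ ^ 2)).comp_hasFDerivAt w h1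
  refine (h2.congr_fderiv ?_)
  ext v
  simp [eta]
  ring

lemma eta_int_pos {n : ℕ} : 0 < ∫ w : En n, eta w := by
  refine eta_cont.integral_pos_of_hasCompactSupport_nonneg_nonzero eta_supp eta_nonneg (x := 0) ?_
  simp [eta]

lemma int_mul_eta {n : ℕ} {f : En n → ℝ} (hf : Continuous f) :
    Integrable (fun w => f w * eta w) :=
  (hf.mul eta_cont).integrable_of_hasCompactSupport eta_supp.mul_left

lemma int_mul_zet {n : ℕ} {f : En n → ℝ} (hf : Continuous f) :
    Integrable (fun w => f w * zet w) :=
  (hf.mul zet_cont).integrable_of_hasCompactSupport zet_supp.mul_left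

/-! ### The weighted sub-mean value property -/

lemma deriv_mean {n : ℕ} {f : En n → ℝ} (hf : ContDiff ℝ 2 f) (x : En n) (s : ℝ) :
    HasDerivAt (fun s : ℝ => ∫ w, f (x + s • w) * eta w)
      (∫ w, fderiv ℝ f (x + s • w) w * eta w) s := by
  have hf' : Continuous (fderiv ℝ f) := hf.continuous_fderiv (by norm_num)
  have hc : Continuous f := hf.continuous
  have hK : IsCompact (Icc (s - 1) (s + 1) ×ˢ closedBall (0 : En n) 1) :=
    isCompact_Icc.prod (isCompact_closedBall _ _)
  have hcont : Continuous (fun p : ℝ × En n => fderiv ℝ f (x + p.1 • p.2) p.2 * eta p.2) := by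
    refine Continuous.mul ?_ (eta_cont.comp continuous_snd)
    exact (hf'.comp (by fun_prop)).clm_apply continuous_snd
  obtain ⟨B, hB⟩ := hK.exists_bound_of_continuousOn hcont.continuousOn
  refine (hasDerivAt_integral_of_dominated_loc_of_deriv_le (μ := volume)
    (F := fun s w => f (x + s • w) * eta w)
    (F' := fun s w => fderiv ℝ f (x + s • w) w * eta w)
    (bound := (closedBall (0 : En n) 1).indicator fun _ => B)
    (s := Ioo (s - 1) (s + 1)) (Ioo_mem_nhds (by linarith) (by linarith)) ?_ ?_ ?_ ?_ ?_ ?_).2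
  · refine Filter.Eventually.of_forall fun t => ?_
    exact (int_mul_eta (f := fun w => f (x + t • w)) (by fun_prop)).aestronglyMeasurable
  · exact int_mul_eta (f := fun w => f (x + s • w)) (by fun_prop)
  · exact (hcont.comp (by fun_prop : Continuous fun w : En n => (s, w))).aestronglyMeasurable
  · refine Filter.Eventually.of_forall fun w t ht => ?_
    by_cases hw : w ∈ closedBall (0 : En n) 1
    · rw [indicator_of_mem hw]
      exact hB (t, w) ⟨Ioo_subset_Icc_self ht, hw⟩
    · rw [indicator_of_notMem hw]
      rw [eta_zero (by simp at hw; exact hw.le)]; simp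
  · exact (integrable_indicator_iff measurableSet_closedBall).2
      (integrableOn_const (measure_closedBall_lt_top.ne))
  · refine Filter.Eventually.of_forall fun w t _ => ?_
    apply HasDerivAt.mul_const
    have h1 : HasDerivAt (fun t : ℝ => x + t • w) w t := by
      simpa using ((hasDerivAt_id t).smul_const w).const_add x
    exact ((hf.differentiable (by norm_num)) (x + t • w)).hasFDerivAt.comp_hasDerivAt t h1

lemma deriv_mean_eq {n : ℕ} {f : En n → ℝ} (hf : ContDiff ℝ 2 f) (x : En n) (s : ℝ) :
    6 * (∫ w, fderiv ℝ f (x + s • w) w * eta w) = s * ∫ w, lap f (x + s • w) * zet w := by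
  have hf' : ContDiff ℝ 1 (fderiv ℝ f) := hf.fderiv_right (by norm_num)
  set e : Fin n → En n := fun i => EuclideanSpace.single i 1 with he
  have hgi : ∀ i, ContDiff ℝ 1 (fun y => fderiv ℝ f y (e i)) := fun i =>
    hf'.clm_apply contDiff_const
  have hd : ∀ i (w : En n), HasFDerivAt (fun w => fderiv ℝ f (x + s • w) (e i))
      (s • fderiv ℝ (fun y => fderiv ℝ f y (e i)) (x + s • w)) w := by
    intro i w
    have h1 : HasFDerivAt (fun w : En n => x + s • w) (s • ContinuousLinearMap.id ℝ (En n)) w :=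
      ((hasFDerivAt_id w).const_smul s).const_add x
    have h2 := (((hgi i).differentiable (by norm_num)) (x + s • w)).hasFDerivAt.comp w h1
    refine h2.congr_fderiv ?_
    ext v; simp
  have hc2 : ∀ i, Continuous (fun y => fderiv ℝ (fun y => fderiv ℝ f y (e i)) y (e i)) := fun i =>
    ((hgi i).continuous_fderiv (by norm_num)).clm_apply continuous_const
  have hc1 : ∀ i, Continuous (fun y => fderiv ℝ f y (e i)) := fun i => (hgi i).continuous
  have hzet : ∀ w : En n, ∀ i, fderiv ℝ (zet (n := n)) w (e i) = -6 * (w i * eta w) := by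
    intro w i
    rw [(zet_diff w).fderiv]
    simp [he, EuclideanSpace.inner_single_right]
    ring
  have key : ∀ i, 6 * ∫ w : En n, fderiv ℝ f (x + s • w) (e i) * w i * eta w =
      s * ∫ w : En n, fderiv ℝ (fun y => fderiv ℝ f y (e i)) (x + s • w) (e i) * zet w := by
    intro i
    have hA : Continuous fun w : En n => fderiv ℝ f (x + s • w) (e i) :=
      (hc1 i).comp (by fun_prop)
    have hA2 : Continuous fun w : En n =>
        fderiv ℝ (fun y => fderiv ℝ f y (e i)) (x + s • w) (e i) := (hc2 i).comp (by fun_prop)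
    have hwi : Continuous fun w : En n => w i := by fun_prop
    have hp := integral_mul_fderiv_eq_neg_fderiv_mul_of_integrable (μ := (volume : Measure (En n)))
      (f := fun w => fderiv ℝ f (x + s • w) (e i)) (g := zet (n := n)) (v := e i) ?_ ?_ ?_ ?_ ?_
    · simp only [hzet, (hd i _).fderiv] at hp
      simp only [_root_.smul_apply, smul_eq_mul] at hp
      rw [← integral_const_mul, ← integral_const_mul, ← neg_inj, ← integral_neg]
      simp only [mul_assoc] at hp ⊢
      rw [← hp]
      congr 1; ext w; ring
    · simp only [(hd i _).fderiv]
      exact int_mul_zet (f := fun w => s * fderiv ℝ (fun y => fderiv ℝ f y (e i)) (x + s • w) (e i))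
        (by fun_prop)
    · simp only [hzet]
      have := int_mul_eta (f := fun w : En n => fderiv ℝ f (x + s • w) (e i) * (-6 * w i))
        (by fun_prop)
      refine this.congr (Filter.Eventually.of_forall fun w => ?_)
      simp only; ring
    · exact int_mul_zet hA
    · exact fun w _ => (hd i w).differentiableAt
    · exact fun w _ => (zet_diff w).differentiableAt
  have hexp : ∀ w : En n, fderiv ℝ f (x + s • w) w * eta w
      = ∑ i, fderiv ℝ f (x + s • w) (e i) * w i * eta w := by
    intro w
    rw [← Finset.sum_mul]
    congr 1
    conv_lhs => rw [show w = ∑ i, w i • e i from by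
      simpa [he] using ((EuclideanSpace.basisFun (Fin n) ℝ).sum_repr w).symm]
    rw [map_sum]
    have : ∑ i, w i • e i = w := by
      simpa [he] using ((EuclideanSpace.basisFun (Fin n) ℝ).sum_repr w)
    rw [this]
    refine Finset.sum_congr rfl fun i _ => ?_
    simp [mul_comm]
  simp_rw [hexp]
  rw [integral_finsetSum, Finset.mul_sum]
  · simp_rw [key]
    rw [← Finset.mul_sum, ← integral_finsetSum]
    · congr 2; ext w
      rw [← Finset.sum_mul]; rfl
    · intro i _
      exact int_mul_zet (f := fun w => fderiv ℝ (fun y => fderiv ℝ f y (e i)) (x + s • w) (e i))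
        ((hc2 i).comp (by fun_prop))
  · intro i _
    refine int_mul_eta (f := fun w => fderiv ℝ f (x + s • w) (e i) * w i) ?_
    exact ((hc1 i).comp (by fun_prop)).mul (by fun_prop)

lemma sub_mean {n : ℕ} {f : En n → ℝ} (hf : ContDiff ℝ 2 f) (x : En n) {r : ℝ} (hr : 0 ≤ r)
    (hl : ∀ y ∈ ball x r, 0 ≤ lap f y) :
    f x * ∫ w : En n, eta w ≤ ∫ w, f (x + r • w) * eta w := by
  have hmono : MonotoneOn (fun s : ℝ => ∫ w, f (x + s • w) * eta w) (Icc 0 r) := by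
    apply monotoneOn_of_deriv_nonneg (convex_Icc _ _)
    · exact fun s _ => (deriv_mean hf x s).continuousAt.continuousWithinAt
    · exact fun s _ => (deriv_mean hf x s).differentiableAt.differentiableWithinAt
    · intro s hs
      rw [interior_Icc] at hs
      rw [(deriv_mean hf x s).deriv]
      have h6 := deriv_mean_eq hf x s
      have : 0 ≤ ∫ w, lap f (x + s • w) * zet w := by
        apply integral_nonneg
        intro w
        by_cases hw : 1 ≤ ‖w‖
        · simp [zet_zero hw]
        · refine mul_nonneg (hl _ ?_) (zet_nonneg w)
          rw [mem_ball, dist_eq_norm, add_sub_cancel_left, norm_smul, Real.norm_eq_abs,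
            abs_of_pos hs.1]
          push Not at hw
          nlinarith [hs.1, hs.2, norm_nonneg w]
      have := mul_nonneg hs.1.le this
      linarith
  have := hmono (left_mem_Icc.2 hr) (right_mem_Icc.2 hr) hr
  simp only [zero_smul, add_zero] at this
  rwa [integral_const_mul] at this
/-! ### The setting, mean value property and Harnack inequality for the profile -/

structure Setup {n : ℕ} (c C : ℝ) (U : Set (En n)) (h : En n → ℝ) : Prop where
  c0 : 0 < c
  c1 : c < 1
  C1 : 1 < C
  fr : (frontier U).Nonempty
  unb : ¬ Bornology.IsBounded U
  unif : IsUniformDomain c C U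
  cont : ContinuousOn h (closure U)
  pos : ∀ z ∈ U, 0 < h z
  harm : IsHarmonicOn h U
  zero : ∀ z ∈ frontier U, h z = 0

lemma lap_congr {n : ℕ} {f g : En n → ℝ} {x : En n} (hfg : f =ᶠ[nhds x] g) :
    lap f x = lap g x := by
  unfold lap
  refine Finset.sum_congr rfl fun i _ => ?_
  have h1 : (fun y => fderiv ℝ f y (EuclideanSpace.single i 1)) =ᶠ[nhds x]
      (fun y => fderiv ℝ g y (EuclideanSpace.single i 1)) := by
    filter_upwards [hfg.eventuallyEq_nhds] with y hy
    rw [hy.fderiv_eq]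
  rw [h1.fderiv_eq]

lemma lap_neg {n : ℕ} (f : En n → ℝ) (x : En n) : lap (fun y => - f y) x = - lap f x := by
  unfold lap
  rw [← Finset.sum_neg_distrib]
  refine Finset.sum_congr rfl fun i _ => ?_
  have : (fun y => fderiv ℝ (fun y => - f y) y (EuclideanSpace.single i 1)) =
      fun y => - (fderiv ℝ f y (EuclideanSpace.single i 1)) := by
    ext y
    rw [fderiv_fun_neg]; rfl
  rw [this, fderiv_fun_neg]; rfl

lemma lap_zero {n : ℕ} (x : En n) : lap (fun _ : En n => (0:ℝ)) x = 0 := by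
  unfold lap
  simp

section
variable {n : ℕ} {c C : ℝ} {U : Set (En n)} {h : En n → ℝ}

lemma Setup.ball_sub (S : Setup c C U h) {z : En n} (hz : z ∈ U) {ρ : ℝ}
    (hρ : ρ ≤ infDist z (frontier U)) : ball z ρ ⊆ U := by
  rcases le_or_gt ρ 0 with h0 | h0
  · rw [ball_eq_empty.2 h0]; exact empty_subset _
  refine (convex_ball z ρ).isPreconnected.subset_of_closure_inter_subset S.unif.1
    ⟨z, mem_ball_self h0, hz⟩ ?_
  rintro w ⟨hw, hwb⟩
  by_contra hwU
  have hf : w ∈ frontier U := by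
    rw [frontier, S.unif.1.interior_eq]; exact ⟨hw, hwU⟩
  have h1 := infDist_le_dist_of_mem (x := z) hf
  rw [mem_ball, dist_comm] at hwb
  linarith

lemma Setup.ext_cont (S : Setup c C U h) : Continuous (U.indicator h) :=
  continuous_indicator S.zero S.cont

lemma Setup.ext_nonneg (S : Setup c C U h) (y : En n) : 0 ≤ U.indicator h y :=
  indicator_nonneg (fun z hz => (S.pos z hz).le) y

lemma Setup.mean (S : Setup c C U h) {b : En n} {r r' : ℝ} (hr : 0 < r) (hrr : r < r')
    (hb : ball b r' ⊆ U) :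
    h b * ∫ w : En n, eta w = ∫ w, U.indicator h (b + r • w) * eta w := by
  let χ : ContDiffBump b := ⟨r, (r + r') / 2, hr, by linarith⟩
  set g : En n → ℝ := fun y => χ y * h y with hg
  have hgC : ContDiff ℝ 2 g := by
    rw [contDiff_iff_contDiffAt]
    intro y
    by_cases hy : y ∈ ball b r'
    · exact χ.contDiff.contDiffAt.mul (S.harm.1.contDiffAt (S.unif.1.mem_nhds (hb hy)))
    · have : g =ᶠ[nhds y] fun _ => 0 := by
        have hy' : y ∉ tsupport χ := by
          rw [χ.tsupport_eq]
          simp only [mem_closedBall, not_le, mem_ball, not_lt] at hy ⊢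
          change (r + r') / 2 < _
          linarith
        filter_upwards [(isClosed_tsupport χ).isOpen_compl.mem_nhds hy'] with z hz
        have : χ z = 0 := image_eq_zero_of_notMem_tsupport hz
        simp [hg, this]
      exact contDiffAt_const.congr_of_eventuallyEq this
  have hgl : ∀ y ∈ ball b r, lap g y = 0 := by
    intro y hy
    have : g =ᶠ[nhds y] h := by
      filter_upwards [isOpen_ball.mem_nhds hy] with z hz
      have : χ z = 1 := χ.one_of_mem_closedBall (ball_subset_closedBall hz)
      simp [hg, this]
    rw [lap_congr this]
    exact S.harm.2 y (hb (ball_subset_ball hrr.le hy))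
  have hgb : g b = h b := by
    have : χ b = 1 := χ.one_of_mem_closedBall (mem_closedBall_self hr.le)
    simp [hg, this]
  have hge : ∀ w : En n, U.indicator h (b + r • w) * eta w = g (b + r • w) * eta w := by
    intro w
    by_cases hw : 1 ≤ ‖w‖
    · simp [eta_zero hw]
    · push Not at hw
      have hm : b + r • w ∈ ball b r := by
        rw [mem_ball, dist_eq_norm, add_sub_cancel_left, norm_smul, Real.norm_eq_abs,
            abs_of_pos hr]
        nlinarith
      have : χ (b + r • w) = 1 := χ.one_of_mem_closedBall (ball_subset_closedBall hm)
      rw [indicator_of_mem (hb (ball_subset_ball hrr.le hm))]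
      simp [hg, this]
  simp_rw [hge]
  apply le_antisymm
  · rw [← hgb]
    exact sub_mean hgC b hr.le fun y hy => (hgl y hy).ge
  · have := sub_mean hgC.neg b hr.le (fun y hy => by
      have := lap_neg g y
      rw [hgl y hy, neg_zero] at this
      exact this.ge)
    simp only [neg_mul] at this
    rw [integral_neg, hgb] at this
    linarith

lemma Setup.harnack (S : Setup c C U h) {a b : En n} {r : ℝ} (hr : 0 < r)
    (hb : ball b (4 * r) ⊆ U) (hab : dist a b ≤ r) : h a ≤ 4 * 3 ^ n * h b := by
  have hI := eta_int_pos (n := n)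
  have ha : ball a (2 * r) ⊆ U := by
    refine Subset.trans (ball_subset_ball' ?_) hb
    linarith
  have h1 := S.mean hr (by linarith) ha
  have h2 := S.mean (r := 3 * r) (by linarith) (by linarith) hb
  have h3 : ∫ w : En n, U.indicator h (b + (3 * r) • w) * eta w =
      (3 ^ n)⁻¹ * ∫ w : En n, U.indicator h (a + r • w) *
        eta ((3 * r)⁻¹ • (a - b) + (3:ℝ)⁻¹ • w) := by
    rw [← integral_add_left_eq_self _ ((3 * r)⁻¹ • (a - b))]
    have h4 := Measure.integral_comp_smul (volume : Measure (En n))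
      (fun w => U.indicator h (b + (3 * r) • ((3 * r)⁻¹ • (a - b) + w)) *
        eta ((3 * r)⁻¹ • (a - b) + w)) (3:ℝ)⁻¹
    simp only [finrank_euclideanSpace, Fintype.card_fin, inv_pow, inv_inv, abs_pow,
      smul_eq_mul] at h4
    rw [abs_of_pos (by norm_num : (0:ℝ) < 3)] at h4
    rw [← mul_right_inj' (by positivity : (3:ℝ) ^ n ≠ 0), ← h4, ← mul_assoc,
      mul_inv_cancel₀ (by positivity), one_mul]
    congr 1; ext w
    congr 2
    rw [smul_add, smul_smul, smul_smul, mul_inv_cancel₀ (by positivity), one_smul,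
      show 3 * r * 3⁻¹ = r by ring]
    abel
  have hc1 : Continuous fun w : En n => U.indicator h (a + r • w) :=
    S.ext_cont.comp (by fun_prop)
  have h5 : ∫ w : En n, U.indicator h (a + r • w) * eta w * 4⁻¹ ≤
      ∫ w : En n, U.indicator h (a + r • w) *
        eta ((3 * r)⁻¹ • (a - b) + (3:ℝ)⁻¹ • w) := by
    apply integral_mono
    · exact (int_mul_eta hc1).mul_const _
    · apply (hc1.mul (eta_cont.comp (by fun_prop))).integrable_of_hasCompactSupport
      apply HasCompactSupport.mul_left
      refine HasCompactSupport.intro (isCompact_closedBall (0 : En n) 4) fun w hw => eta_zero ?_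
      simp only [mem_closedBall, dist_zero_right, not_le] at hw
      have e1 : ‖(3 * r)⁻¹ • (a - b)‖ ≤ 1 / 3 := by
        rw [norm_smul, norm_inv, Real.norm_eq_abs, abs_of_pos (by positivity), ← dist_eq_norm,
          inv_mul_le_iff₀ (by positivity)]
        linarith
      have e2 : ‖(3:ℝ)⁻¹ • w‖ = ‖w‖ / 3 := by
        rw [norm_smul]; norm_num; ring
      have e3 := norm_sub_le ((3 * r)⁻¹ • (a - b) + (3:ℝ)⁻¹ • w) ((3 * r)⁻¹ • (a - b))
      rw [add_sub_cancel_left] at e3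
      linarith
    · intro w
      simp only
      rw [mul_assoc]
      apply mul_le_mul_of_nonneg_left _ (S.ext_nonneg _)
      by_cases hw : 1 ≤ ‖w‖
      · rw [eta_zero hw]; simpa using eta_nonneg _
      · push Not at hw
        have e1 : ‖(3 * r)⁻¹ • (a - b)‖ ≤ 1 / 3 := by
          rw [norm_smul, norm_inv, Real.norm_eq_abs, abs_of_pos (by positivity), ← dist_eq_norm,
            inv_mul_le_iff₀ (by positivity)]
          linarith
        have e2 : ‖(3:ℝ)⁻¹ • w‖ = ‖w‖ / 3 := by
          rw [norm_smul]; norm_num; ring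
        have e3 := norm_add_le ((3 * r)⁻¹ • (a - b)) ((3:ℝ)⁻¹ • w)
        have e4 := le_eta (a := 2 / 3) (w := (3 * r)⁻¹ • (a - b) + (3:ℝ)⁻¹ • w)
          (by norm_num) (by norm_num) (by linarith)
        have e5 := eta_le_one w
        norm_num at e4 ⊢
        linarith
  rw [integral_mul_const, ← h1] at h5
  rw [h3] at h2
  have h6 : (3:ℝ) ^ n * (h b * ∫ w : En n, eta w) = ∫ w : En n, U.indicator h (a + r • w) *
        eta ((3 * r)⁻¹ • (a - b) + (3:ℝ)⁻¹ • w) := by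
    rw [h2, ← mul_assoc, mul_inv_cancel₀ (by positivity), one_mul]
  rw [← h6] at h5
  have h7 : h a * ∫ w : En n, eta w ≤ (4 * 3 ^ n * h b) * ∫ w : En n, eta w := by linarith
  exact le_of_mul_le_mul_right h7 hI

/-! ### Subharmonicity of the cube of the extended profile -/

lemma Setup.lap_cube (S : Setup c C U h) (ε : ℝ) {y : En n} (hy : y ∈ U) :
    0 ≤ lap (fun y => (max (h y - ε) 0) ^ 3) y := by
  have hC : ContDiffAt ℝ 2 h y := S.harm.1.contDiffAt (S.unif.1.mem_nhds hy)
  have hd : ∀ z ∈ U, DifferentiableAt ℝ h z := fun z hz =>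
    (S.harm.1.contDiffAt (S.unif.1.mem_nhds hz)).differentiableAt (by norm_num)
  have hcomp : ∀ (k : ℕ), ∀ z ∈ U, HasFDerivAt (fun y => (max (h y - ε) 0) ^ (k + 2))
      ((((k:ℝ) + 2) * (max (h z - ε) 0) ^ (k + 1)) • fderiv ℝ h z) z := by
    intro k z hz
    have h1 : HasFDerivAt (fun y => h y - ε) (fderiv ℝ h z) z :=
      (hd z hz).hasFDerivAt.sub_const ε
    exact (hasDerivAt_pp k (h z - ε)).comp_hasFDerivAt z h1
  have hl := S.harm.2 y hy
  unfold lap at hl ⊢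
  have key : ∀ i : Fin n, fderiv ℝ (fun z => fderiv ℝ (fun y => (max (h y - ε) 0) ^ 3) z
      (EuclideanSpace.single i 1)) y (EuclideanSpace.single i 1) =
      6 * (max (h y - ε) 0) * (fderiv ℝ h y (EuclideanSpace.single i 1)) ^ 2 +
      3 * (max (h y - ε) 0) ^ 2 * fderiv ℝ (fun z => fderiv ℝ h z
      (EuclideanSpace.single i 1)) y (EuclideanSpace.single i 1) := by
    intro i
    have e1 : (fun z => fderiv ℝ (fun y => (max (h y - ε) 0) ^ 3) z
      (EuclideanSpace.single i 1)) =ᶠ[nhds y] fun z =>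
        (3 * (max (h z - ε) 0) ^ 2) * (fderiv ℝ h z (EuclideanSpace.single i 1)) := by
      filter_upwards [S.unif.1.mem_nhds hy] with z hz
      have := (hcomp 1 z hz).fderiv
      norm_num at this
      rw [this]; simp
    rw [e1.fderiv_eq]
    have hd2 : DifferentiableAt ℝ (fun z => fderiv ℝ h z (EuclideanSpace.single i 1)) y :=
      (((hC.fderiv_right (m := 1) (by norm_num)).differentiableAt (by norm_num)).clm_apply
        (differentiableAt_const _))
    have h2 := ((hcomp 0 y hy).const_mul 3).mul hd2.hasFDerivAt
    simp only [CharP.cast_eq_zero, zero_add, pow_one] at h2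
    have h3 := h2.fderiv
    simp only [Pi.mul_def] at h3
    rw [h3]
    simp
    ring
  simp_rw [key]
  rw [Finset.sum_add_distrib, ← Finset.mul_sum, ← Finset.mul_sum, hl, mul_zero, add_zero]
  have := le_max_right (h y - ε) 0
  positivity

lemma Setup.cube_mean (S : Setup c C U h) (y : En n) {r : ℝ} (hr : 0 ≤ r) :
    (U.indicator h y) ^ 3 * ∫ w : En n, eta w ≤
      ∫ w, (U.indicator h (y + r • w)) ^ 3 * eta w := by
  have step : ∀ ε : ℝ, 0 < ε → (max (U.indicator h y - ε) 0) ^ 3 * ∫ w : En n, eta w ≤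
      ∫ w, (U.indicator h (y + r • w)) ^ 3 * eta w := by
    intro ε hε
    set f : En n → ℝ := fun y => (max (U.indicator h y - ε) 0) ^ 3 with hf
    have hU : ∀ z ∈ U, f =ᶠ[nhds z] fun y => (max (h y - ε) 0) ^ 3 := by
      intro z hz
      filter_upwards [S.unif.1.mem_nhds hz] with w hw
      simp [hf, indicator_of_mem hw]
    have hV : ∀ z ∉ U, f =ᶠ[nhds z] fun _ => 0 := by
      intro z hz
      have h0 : U.indicator h z < ε := by rw [indicator_of_notMem hz]; exact hε
      filter_upwards [S.ext_cont.continuousAt.eventually_lt continuousAt_const h0] with w hw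
      simp only [hf]
      rw [max_eq_right (by linarith)]; simp
    have hfC : ContDiff ℝ 2 f := by
      rw [contDiff_iff_contDiffAt]
      intro z
      by_cases hz : z ∈ U
      · refine ContDiffAt.congr_of_eventuallyEq ?_ (hU z hz)
        exact contDiff_pp3.contDiffAt.comp z
          ((S.harm.1.contDiffAt (S.unif.1.mem_nhds hz)).sub contDiffAt_const)
      · exact contDiffAt_const.congr_of_eventuallyEq (hV z hz)
    have := sub_mean hfC y hr (fun z _ => by
      by_cases hz : z ∈ U
      · rw [lap_congr (hU z hz)]; exact S.lap_cube ε hz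
      · rw [lap_congr (hV z hz), lap_zero])
    refine this.trans ?_
    apply integral_mono
    · exact int_mul_eta (f := fun w => f (y + r • w)) (hfC.continuous.comp (by fun_prop))
    · exact int_mul_eta (f := fun w => (U.indicator h (y + r • w)) ^ 3)
        ((S.ext_cont.comp (by fun_prop)).pow 3)
    · intro w
      apply mul_le_mul_of_nonneg_right _ (eta_nonneg w)
      apply pow_le_pow_left₀ (le_max_right _ _)
      exact max_le (by linarith) (S.ext_nonneg _)
  have hlim : Filter.Tendsto (fun ε : ℝ => (max (U.indicator h y - ε) 0) ^ 3 * ∫ w : En n, eta w)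
      (nhdsWithin 0 (Ioi 0)) (nhds ((max (U.indicator h y - 0) 0) ^ 3 * ∫ w : En n, eta w)) := by
    apply Filter.Tendsto.mono_left _ nhdsWithin_le_nhds
    apply Continuous.tendsto
      (f := fun ε : ℝ => (max (U.indicator h y - ε) 0) ^ 3 * ∫ w : En n, eta w)
    fun_prop
  have := le_of_tendsto hlim (by
    filter_upwards [self_mem_nhdsWithin] with ε hε using step ε hε)
  rwa [sub_zero, max_eq_left (S.ext_nonneg y)] at this

end
/-! ### Corkscrew points and Harnack chains -/

section
variable {n : ℕ} {c C : ℝ} {U : Set (En n)} {h : En n → ℝ}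

lemma Setup.corkscrew (S : Setup c C U h) {y : En n} (hy : y ∈ U) {t : ℝ} (ht : 0 < t) :
    ∃ a ∈ U, dist y a = t ∧ c * t ≤ infDist a (frontier U) := by
  obtain ⟨b, hb, hbt⟩ : ∃ b ∈ U, 2 * t ≤ dist y b := by
    by_contra hcon
    push Not at hcon
    apply S.unb
    refine (isBounded_ball (x := y) (r := 2 * t)).subset fun b hb => ?_
    rw [mem_ball, dist_comm]; exact hcon b hb
  obtain ⟨γ, ⟨hγc, hγU, hγ0, hγ1⟩, -, hγ⟩ := S.unif.2.2 y hy b hb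
  have hc : ContinuousOn (fun s => dist y (γ s)) (Icc 0 1) := by fun_prop
  have := intermediate_value_Icc (zero_le_one' ℝ) hc
  obtain ⟨s, hs, hst⟩ := this (show t ∈ Icc _ _ by
    constructor
    · simp [hγ0, ht.le]
    · simp only [hγ1]; linarith)
  refine ⟨γ s, hγU hs, hst, ?_⟩
  refine le_trans ?_ (hγ s hs)
  apply mul_le_mul_of_nonneg_left _ S.c0.le
  simp only at hst
  apply le_min hst.ge
  have := dist_triangle y (γ s) b
  linarith

lemma Setup.chain (S : Setup c C U h) {γ : ℝ → En n} (hγ : ContinuousOn γ (Icc 0 1))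
    {ε : ℝ} (hε : 0 < ε) (hb : ∀ t ∈ Icc (0:ℝ) 1, ball (γ t) (4 * ε) ⊆ U) (N : ℕ) :
    ∀ s ∈ Icc (0:ℝ) 1, eVariationOn γ (Icc s 1) ≤ ENNReal.ofReal (N * ε) →
      h (γ s) ≤ (4 * 3 ^ n) ^ (N + 1) * h (γ 1) := by
  have hH : (1:ℝ) ≤ 4 * 3 ^ n := by
    have : (1:ℝ) ≤ 3 ^ n := one_le_pow₀ (by norm_num)
    linarith
  have hpos : ∀ t ∈ Icc (0:ℝ) 1, 0 < h (γ t) := fun t ht =>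
    S.pos _ (hb t ht (mem_ball_self (by linarith)))
  have h1m : (1:ℝ) ∈ Icc (0:ℝ) 1 := right_mem_Icc.2 zero_le_one
  induction N with
  | zero =>
    intro s hs hv
    have h1 := eVariationOn.edist_le γ (left_mem_Icc.2 hs.2) (right_mem_Icc.2 hs.2)
    simp only [CharP.cast_eq_zero, zero_mul, ofReal_zero, nonpos_iff_eq_zero] at hv
    rw [hv, nonpos_iff_eq_zero, edist_eq_zero] at h1
    rw [h1]
    have := hpos 1 h1m
    simp only [zero_add, pow_one]
    nlinarith
  | succ N ih =>
    intro s hs hv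
    by_cases hd : dist (γ s) (γ 1) ≤ ε
    · refine (S.harnack hε (hb 1 h1m) hd).trans ?_
      apply mul_le_mul_of_nonneg_right _ (hpos 1 h1m).le
      exact le_self_pow₀ hH (by omega)
    · push Not at hd
      have hc : ContinuousOn (fun t => dist (γ s) (γ t)) (Icc s 1) := by
        have := hγ.mono (Icc_subset_Icc_left hs.1)
        fun_prop
      obtain ⟨t, ht, hte⟩ := intermediate_value_Icc hs.2 hc (show ε ∈ Icc _ _ from
        ⟨by simp [hε.le], hd.le⟩)
      simp only at hte
      have ht' : t ∈ Icc (0:ℝ) 1 := ⟨hs.1.trans ht.1, ht.2⟩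
      have hadd := eVariationOn.Icc_add_Icc γ (s := univ) ht.1 ht.2 (mem_univ _)
      simp only [univ_inter] at hadd
      have h1 := eVariationOn.edist_le γ (left_mem_Icc.2 ht.1) (right_mem_Icc.2 ht.1)
      rw [edist_dist, hte] at h1
      have h2 : eVariationOn γ (Icc t 1) ≤ ENNReal.ofReal (N * ε) := by
        have h3 : ENNReal.ofReal ε + eVariationOn γ (Icc t 1) ≤
            ENNReal.ofReal ε + ENNReal.ofReal (N * ε) := by
          rw [← ENNReal.ofReal_add hε.le (by positivity)]
          calc _ ≤ _ := add_le_add_left h1 _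
            _ = _ := hadd
            _ ≤ _ := hv
            _ = _ := by congr 1; push_cast; ring
        exact (ENNReal.add_le_add_iff_left ENNReal.ofReal_ne_top).1 h3
      have h4 := ih t ht' h2
      have h5 := S.harnack hε (hb t ht') hte.le
      calc h (γ s) ≤ 4 * 3 ^ n * h (γ t) := h5
        _ ≤ 4 * 3 ^ n * ((4 * 3 ^ n) ^ (N + 1) * h (γ 1)) :=
          mul_le_mul_of_nonneg_left h4 (by positivity)
        _ = _ := by ring

end

lemma link (n : ℕ) {c C c' K : ℝ} (hc : 0 < c) (hC : 1 < C) (hc' : 0 < c') (hK : 0 < K) :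
    ∃ A : ℝ, 1 ≤ A ∧ ∀ (U : Set (En n)) (h : En n → ℝ), Setup c C U h →
      ∀ s : ℝ, 0 < s → ∀ a ∈ U, ∀ b ∈ U, c' * s ≤ infDist a (frontier U) →
        c' * s ≤ infDist b (frontier U) → dist a b ≤ K * s → h a ≤ A * h b := by
  have hH : (1:ℝ) ≤ 4 * 3 ^ n := by
    have : (1:ℝ) ≤ 3 ^ n := one_le_pow₀ (by norm_num)
    linarith
  refine ⟨(4 * 3 ^ n) ^ (⌈8 * C * K / (c * c')⌉₊ + 1), one_le_pow₀ hH, ?_⟩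
  intro U h S s hs a ha b hb hda hdb hab
  obtain ⟨γ, ⟨hγc, hγU, hγ0, hγ1⟩, hlen, hγ⟩ := S.unif.2.2 a ha b hb
  have hε : 0 < c * c' * s / 8 := by positivity
  have hc's : 0 < c' * s := by positivity
  have hball : ∀ t ∈ Icc (0:ℝ) 1, ball (γ t) (4 * (c * c' * s / 8)) ⊆ U := by
    intro t ht
    apply S.ball_sub (hγU ht)
    have hc1 := S.c1
    have hle : 4 * (c * c' * s / 8) ≤ c' * s / 2 := by nlinarith
    rcases le_or_gt (dist a (γ t)) (c' * s / 2) with h1 | h1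
    · have := infDist_le_infDist_add_dist (s := frontier U) (x := a) (y := γ t)
      linarith
    rcases le_or_gt (dist (γ t) b) (c' * s / 2) with h2 | h2
    · have := infDist_le_infDist_add_dist (s := frontier U) (x := b) (y := γ t)
      rw [dist_comm b] at this
      linarith
    · refine le_trans ?_ (hγ t ht)
      have : c' * s / 2 ≤ min (dist a (γ t)) (dist (γ t) b) := le_min h1.le h2.le
      nlinarith
  have := S.chain hγc hε hball ⌈8 * C * K / (c * c')⌉₊ 0 (left_mem_Icc.2 zero_le_one) (by
    refine hlen.trans (ENNReal.ofReal_le_ofReal ?_)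
    have h1 := Nat.le_ceil (8 * C * K / (c * c'))
    calc C * dist a b ≤ C * (K * s) := by gcongr
      _ = 8 * C * K / (c * c') * (c * c' * s / 8) := by field_simp
      _ ≤ _ := by gcongr)
  rwa [hγ0, hγ1] at this

lemma poly_bound {n : ℕ} {c C A : ℝ} {U : Set (En n)} {h : En n → ℝ} (S : Setup c C U h)
    (hA1 : 1 ≤ A)
    (hA : ∀ s : ℝ, 0 < s → ∀ a ∈ U, ∀ b ∈ U, c / 4 * s ≤ infDist a (frontier U) →
        c / 4 * s ≤ infDist b (frontier U) → dist a b ≤ (8 * C + 3) * s → h a ≤ A * h b)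
    {x z y : En n} {s : ℝ} (hs : 0 < s) (hz : z ∈ U) (hxz : dist x z ≤ s)
    (hdz : c * s ≤ infDist z (frontier U)) (hy : y ∈ U) (hxy : dist x y ≤ 8 * C * s) (k : ℕ) :
    ∀ a ∈ U, dist a y ≤ s / 2 ^ k → c / 4 * (s / 2 ^ k) ≤ infDist a (frontier U) →
      h a ≤ A ^ (k + 1) * h z := by
  have hc0 := S.c0
  have hC1 := S.C1
  induction k with
  | zero =>
    intro a ha hay hda
    simp only [pow_zero, div_one] at hay hda
    simp only [zero_add, pow_one]
    refine hA s hs a ha z hz hda ?_ ?_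
    · nlinarith
    · have h1 := dist_triangle a y z
      have h2 := dist_triangle y x z
      rw [dist_comm y x] at h2
      linarith
  | succ k ih =>
    intro a ha hay hda
    set t := s / 2 ^ (k + 1) with ht
    have ht0 : 0 < t := by positivity
    have h2t : s / 2 ^ k = 2 * t := by rw [ht, pow_succ]; field_simp
    obtain ⟨a', ha', hya', hda'⟩ := S.corkscrew hy (t := 2 * t) (by positivity)
    rw [h2t] at ih
    have hct : 0 < c * t := by positivity
    have h1 := ih a' ha' (by rw [dist_comm]; exact hya'.le) (by linarith)
    have h2 := hA t ht0 a ha a' ha' hda (by linarith) (by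
      have := dist_triangle a y a'
      nlinarith)
    calc h a ≤ A * h a' := h2
      _ ≤ A * (A ^ (k + 1) * h z) := mul_le_mul_of_nonneg_left h1 (by linarith)
      _ = _ := by ring

/-! ### The Carleson estimate -/

set_option maxHeartbeats 1600000 in
lemma carleson (n : ℕ) {c C : ℝ} (hc : 0 < c) (hC : 1 < C) :
    ∃ B : ℝ, 0 < B ∧ ∀ (U : Set (En n)) (h : En n → ℝ), Setup c C U h →
      ∀ x ∈ U, ∀ s : ℝ, 0 < s → ∀ z ∈ U, dist x z ≤ s → c * s ≤ infDist z (frontier U) →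
        ∀ y ∈ U, dist x y ≤ 4 * C * s → h y ≤ B * h z := by
  obtain ⟨A, hA1, hA⟩ := link n (c := c) (C := C) (c' := c / 4) (K := 8 * C + 3) hc hC
    (by positivity) (by positivity)
  obtain ⟨τ, hτ0, hτ⟩ : ∃ τ : ℕ, τ ≠ 0 ∧ A ≤ 2 ^ τ := by
    obtain ⟨τ, h⟩ := pow_unbounded_of_one_lt A (one_lt_two)
    exact ⟨τ + 1, by omega, h.le.trans (pow_le_pow_right₀ one_le_two (by omega))⟩
  set I := ∫ w : En n, eta w with hI
  have hI0 : 0 < I := eta_int_pos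
  set m : ℝ := 49 / 256 * volume.real (ball (0 : En n) (c / 4)) with hm
  have hm0 : 0 < m := by
    have : 0 < volume.real (ball (0 : En n) (c / 4)) :=
      ENNReal.toReal_pos (measure_ball_pos _ _ (by positivity)).ne' measure_ball_lt_top.ne
    positivity
  obtain ⟨l, hl0, hl1, hlm⟩ : ∃ l : ℝ, 0 < l ∧ l ≤ 1 / (8 * C) ∧
      ((((1 - l)⁻¹) ^ τ) ^ 3 - 1) * I < 7 / 8 * m := by
    have hcont : ContinuousAt (fun l : ℝ => ((((1 - l)⁻¹) ^ τ) ^ 3 - 1) * I) 0 := by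
      have : ContinuousAt (fun l : ℝ => (1 - l)⁻¹) 0 :=
        ContinuousAt.inv₀ (by fun_prop) (by norm_num)
      exact (((this.pow τ).pow 3).sub continuousAt_const).mul continuousAt_const
    have h1 : ∀ᶠ l in nhds (0:ℝ), ((((1 - l)⁻¹) ^ τ) ^ 3 - 1) * I < 7 / 8 * m := by
      apply hcont.eventually_lt continuousAt_const
      simp only [sub_zero, inv_one, one_pow, sub_self, zero_mul]; positivity
    have h2 : ∀ᶠ l in nhdsWithin (0:ℝ) (Ioi 0), ((((1 - l)⁻¹) ^ τ) ^ 3 - 1) * I < 7 / 8 * m :=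
      h1.filter_mono nhdsWithin_le_nhds
    have h3 : ∀ᶠ l in nhdsWithin (0:ℝ) (Ioi 0), l ∈ Ioc 0 (1 / (8 * C)) :=
      Ioc_mem_nhdsGT (by positivity)
    obtain ⟨l, hl, hl'⟩ := (h2.and h3).exists
    exact ⟨l, hl'.1, hl'.2, hl⟩
  have hl8 : l * (8 * C) ≤ 1 := by rwa [le_div_iff₀ (by positivity)] at hl1
  have hl2 : l < 1 := by nlinarith
  refine ⟨2 * A * (2 / l) ^ τ, by positivity, ?_⟩
  intro U h S x hx s hs z hz hxz hdz
  have hc1 := S.c1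
  have hz0 := S.pos z hz
  set u := U.indicator h with hu
  have huc : Continuous u := S.ext_cont
  have hu0 : ∀ y, 0 ≤ u y := S.ext_nonneg
  have hCs : 0 < C * s := by positivity
  obtain ⟨y0, hy0, hmax⟩ := (isCompact_closedBall x (8 * C * s)).exists_isMaxOn
    ⟨x, mem_closedBall_self (by positivity)⟩
    (f := fun y => (8 * C * s - dist x y) ^ τ * u y) (by fun_prop)
  rw [isMaxOn_iff] at hmax
  set d := 8 * C * s - dist x y0 with hd
  have hd0' : 0 ≤ d := by
    rw [mem_closedBall, dist_comm] at hy0; linarith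
  have hM0 : 0 < d ^ τ * u y0 := by
    refine lt_of_lt_of_le ?_ (hmax x (mem_closedBall_self (by positivity)))
    simp only [dist_self, sub_zero, hu, indicator_of_mem hx]
    have := S.pos x hx
    positivity
  have hd0 : 0 < d := by
    rcases hd0'.lt_or_eq with h1 | h1
    · exact h1
    · rw [← h1, zero_pow hτ0, zero_mul] at hM0
      exact absurd hM0 (lt_irrefl _)
  have hv0 : 0 < u y0 := pos_of_mul_pos_right hM0 (by positivity)
  have hy0U : y0 ∈ U := by
    by_contra hcon
    rw [hu, indicator_of_notMem hcon] at hv0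
    exact lt_irrefl _ hv0
  have main : d ^ τ * u y0 ≤ 2 * (A * (2 * s / l) ^ τ * h z) := by
    by_contra hcon
    push Not at hcon
    set v := u y0 with hv
    set L := ((1 - l)⁻¹) ^ τ with hL
    have hσ : 0 < l * d := by positivity
    obtain ⟨g, hgU, hyg, hdg⟩ := S.corkscrew hy0U (t := l * d / 2) (by positivity)
    have hdist : ∀ w : En n, ‖w‖ < 1 → dist x (y0 + (l * d) • w) ≤ dist x y0 + l * d := by
      intro w hw
      refine (dist_triangle x y0 _).trans ?_
      rw [dist_self_add_right, norm_smul, Real.norm_eq_abs, abs_of_pos hσ]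
      nlinarith
    have hi : ∀ w : En n, ‖w‖ < 1 → u (y0 + (l * d) • w) ≤ L * v := by
      intro w hw
      have h1 := hdist w hw
      have h2 := hmax (y0 + (l * d) • w) (by
        rw [mem_closedBall, dist_comm]; nlinarith)
      have h3 : ((1 - l) * d) ^ τ ≤ (8 * C * s - dist x (y0 + (l * d) • w)) ^ τ := by
        apply pow_le_pow_left₀ (by nlinarith)
        rw [hd] at h1 ⊢
        linarith
      have h4 := (mul_le_mul_of_nonneg_right h3 (hu0 (y0 + (l * d) • w))).trans h2
      rw [mul_pow] at h4
      have h5 : (1 - l) ^ τ * u (y0 + (l * d) • w) ≤ v := by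
        refine le_of_mul_le_mul_left ?_ (pow_pos hd0 τ)
        linarith
      rw [hL, inv_pow, ← div_eq_inv_mul, le_div_iff₀ (pow_pos (by linarith) τ)]
      linarith
    have hii : ∀ w ∈ ball ((l * d)⁻¹ • (g - y0)) (c / 4),
        u (y0 + (l * d) • w) ≤ v / 2 ∧ ‖w‖ ≤ 3 / 4 := by
      intro w hw
      have hwn : ‖w‖ ≤ 3 / 4 := by
        have e1 : ‖(l * d)⁻¹ • (g - y0)‖ = 1 / 2 := by
          rw [norm_smul, norm_inv, Real.norm_eq_abs, abs_of_pos hσ, ← dist_eq_norm, dist_comm,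
            hyg]
          field_simp
        have e2 := norm_sub_norm_le w ((l * d)⁻¹ • (g - y0))
        rw [mem_ball, dist_eq_norm] at hw
        linarith
      refine ⟨?_, hwn⟩
      have hpg : dist (y0 + (l * d) • w) g < c * (l * d) / 4 := by
        have e1 : y0 + (l * d) • w - g = (l * d) • (w - (l * d)⁻¹ • (g - y0)) := by
          rw [smul_sub, smul_smul, mul_inv_cancel₀ hσ.ne', one_smul]; abel
        rw [dist_eq_norm, e1, norm_smul, Real.norm_eq_abs, abs_of_pos hσ]
        rw [mem_ball, dist_eq_norm] at hw
        nlinarith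
      set p := y0 + (l * d) • w with hp
      have hpU : p ∈ U := by
        apply S.ball_sub hgU hdg
        rw [mem_ball]
        nlinarith [mul_pos hc hσ]
      have hpd : c / 4 * (l * d) ≤ infDist p (frontier U) := by
        have := infDist_le_infDist_add_dist (s := frontier U) (x := g) (y := p)
        rw [dist_comm g p] at this
        linarith
      have hdle : d ≤ 8 * C * s := by rw [hd]; linarith [dist_nonneg (x := x) (y := y0)]
      have hlds : l * d ≤ s := by nlinarith
      obtain ⟨k, hk1, hk2⟩ := exists_nat_pow_near (x := s / (l * d)) (y := 2)
        (by rwa [le_div_iff₀ hσ, one_mul]) one_lt_two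
      have hxp : dist x p ≤ 8 * C * s := by
        have := hdist w (by linarith)
        rw [hd] at hlds
        nlinarith [dist_nonneg (x := x) (y := y0)]
      have hks : s / 2 ^ (k + 1) ≤ l * d := by
        rw [div_lt_iff₀ hσ] at hk2
        rw [div_le_iff₀ (by positivity)]
        linarith
      have h1 := poly_bound S hA1 (hA U h S) hs hz hxz hdz hpU hxp (k + 1) p hpU
        (by rw [dist_self]; positivity) (le_trans (by gcongr) hpd)
      have h2 : A ^ (k + 1 + 1) ≤ A * (2 * s / (l * d)) ^ τ := by
        rw [pow_succ, mul_comm]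
        apply mul_le_mul_of_nonneg_left _ (by linarith)
        calc A ^ (k + 1) ≤ (2 ^ τ) ^ (k + 1) := pow_le_pow_left₀ (by linarith) hτ _
          _ = (2 ^ (k + 1)) ^ τ := by rw [← pow_mul, ← pow_mul, mul_comm]
          _ ≤ _ := by
            apply pow_le_pow_left₀ (by positivity)
            rw [pow_succ]
            calc (2:ℝ) ^ k * 2 ≤ s / (l * d) * 2 := by gcongr
              _ = _ := by ring
      have h3 : h p ≤ A * (2 * s / (l * d)) ^ τ * h z :=
        h1.trans (mul_le_mul_of_nonneg_right h2 hz0.le)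
      have h4 : d ^ τ * h p ≤ A * (2 * s / l) ^ τ * h z := by
        calc d ^ τ * h p ≤ d ^ τ * (A * (2 * s / (l * d)) ^ τ * h z) := by gcongr
          _ = A * (d * (2 * s / (l * d))) ^ τ * h z := by rw [mul_pow]; ring
          _ = _ := by
            congr 3
            field_simp
      rw [hu, indicator_of_mem hpU]
      refine le_of_mul_le_mul_left ?_ (pow_pos hd0 τ)
      linarith
    have hL1 : 1 ≤ L ^ 3 := by
      apply one_le_pow₀
      apply one_le_pow₀
      rw [one_le_inv₀ (by linarith)]; linarith
    have hcm := S.cube_mean y0 (r := l * d) hσ.le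
    set G := ball ((l * d)⁻¹ • (g - y0)) (c / 4) with hG
    have hInt : Integrable (G.indicator fun _ => 7 / 8 * v ^ 3 * (49 / 256)) :=
      (integrable_indicator_iff measurableSet_ball).2 (integrableOn_const measure_ball_lt_top.ne)
    have hpt : ∫ w, (u (y0 + (l * d) • w)) ^ 3 * eta w ≤
        ∫ w, (L ^ 3 * v ^ 3 * eta w - G.indicator (fun _ => 7 / 8 * v ^ 3 * (49 / 256)) w) := by
      apply integral_mono
      · exact int_mul_eta (f := fun w => (u (y0 + (l * d) • w)) ^ 3)
          ((huc.comp (by fun_prop)).pow 3)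
      · exact (int_mul_eta (f := fun _ => L ^ 3 * v ^ 3) continuous_const).sub hInt
      · intro w
        simp only
        by_cases hw : w ∈ G
        · rw [indicator_of_mem hw]
          obtain ⟨h1, h2⟩ := hii w hw
          have h3 : (u (y0 + (l * d) • w)) ^ 3 ≤ (v / 2) ^ 3 := pow_le_pow_left₀ (hu0 _) h1 3
          have h4 := le_eta (by norm_num) (by norm_num) h2
          norm_num at h4
          have h5 := mul_le_mul_of_nonneg_right h3 (eta_nonneg w)
          have hv3 : 0 < v ^ 3 := by positivity
          have h6 : (7 / 8 * v ^ 3) * (49 / 256) ≤ (7 / 8 * v ^ 3) * eta w :=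
            mul_le_mul_of_nonneg_left h4 (by positivity)
          have h7 : 1 * (v ^ 3 * eta w) ≤ L ^ 3 * (v ^ 3 * eta w) :=
            mul_le_mul_of_nonneg_right hL1 (mul_nonneg hv3.le (eta_nonneg w))
          nlinarith
        · rw [indicator_of_notMem hw, sub_zero]
          by_cases hw1 : 1 ≤ ‖w‖
          · simp [eta_zero hw1]
          · push Not at hw1
            rw [← mul_pow]
            exact mul_le_mul_of_nonneg_right (pow_le_pow_left₀ (hu0 _) (hi w hw1) 3) (eta_nonneg w)
    rw [integral_sub (int_mul_eta (f := fun _ => L ^ 3 * v ^ 3) continuous_const) hInt,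
      integral_const_mul, integral_indicator measurableSet_ball, setIntegral_const,
      smul_eq_mul] at hpt
    have hvol : volume.real G = volume.real (ball (0 : En n) (c / 4)) := by
      rw [hG, measureReal_def, measureReal_def, Measure.addHaar_ball_center]
    rw [hvol] at hpt
    have h8 := hcm.trans hpt
    have h9 : v ^ 3 * ((L ^ 3 - 1) * I) ≥ v ^ 3 * (7 / 8 * m) := by
      rw [hm]
      have : v ^ 3 * I ≤ L ^ 3 * v ^ 3 * I -
        volume.real (ball (0 : En n) (c / 4)) * (7 / 8 * v ^ 3 * (49 / 256)) := h8
      nlinarith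
    have h10 : v ^ 3 * ((L ^ 3 - 1) * I) < v ^ 3 * (7 / 8 * m) :=
      mul_lt_mul_of_pos_left hlm (by positivity)
    linarith
  intro y hy hxy
  have h1 := (hmax y (by rw [mem_closedBall, dist_comm]; linarith)).trans main
  rw [hu, indicator_of_mem hy] at h1
  have h2 : s ^ τ ≤ (8 * C * s - dist x y) ^ τ := by
    apply pow_le_pow_left₀ hs.le
    nlinarith
  have h3 := (mul_le_mul_of_nonneg_right h2 (S.pos y hy).le).trans h1
  refine le_of_mul_le_mul_left (h3.trans (le_of_eq ?_)) (pow_pos hs τ)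
  rw [show 2 * s / l = (2 / l) * s by ring, mul_pow]
  ring

/-! ### Doubling -/

lemma innerDist_ge {n : ℕ} {U : Set (En n)} (x y : En n) : edist x y ≤ innerDist U x y := by
  refine le_iInf₂ fun γ hγ => ?_
  have := eVariationOn.edist_le γ (left_mem_Icc.2 (zero_le_one' ℝ)) (right_mem_Icc.2 zero_le_one)
  rwa [hγ.2.2.1, hγ.2.2.2] at this

/-- Volume doubling for the measure `h² dλ` on inner balls of an unbounded uniform
domain, where `h` is a harmonic profile of the domain. -/
theorem statement3 (n : ℕ) (hn : 1 ≤ n) (cu Cu : ℝ)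
    (hcu : cu ∈ Set.Ioo (0:ℝ) 1) (hCu : 1 < Cu) :
    ∃ D : ℝ, 0 < D ∧
      ∀ U : Set (En n), U ≠ Set.univ → (frontier U).Nonempty →
        ¬ Bornology.IsBounded U → IsUniformDomain cu Cu U →
        ∀ h : En n → ℝ, ContinuousOn h (closure U) → (∀ z ∈ U, 0 < h z) →
          IsHarmonicOn h U → (∀ z ∈ frontier U, h z = 0) →
          ∀ x ∈ U, ∀ r : ℝ, 0 < r →
            ∫ y in {y | y ∈ U ∧ innerDist U x y < ENNReal.ofReal (2 * r)}, (h y)^2 ≤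
              D * ∫ y in {y | y ∈ U ∧ innerDist U x y < ENNReal.ofReal r}, (h y)^2 := by
  obtain ⟨B, hB0, hB⟩ := carleson n (c := cu) (C := Cu) hcu.1 hCu
  have hc := hcu.1
  have hC0 : 0 < Cu := by linarith
  refine ⟨B ^ 2 * (4 * 3 ^ n) ^ 2 * (32 * Cu / cu) ^ n, by positivity, ?_⟩
  intro U _ hfr hunb hunif h hcont hpos hharm hzero x hx r hr
  have S : Setup cu Cu U h := ⟨hcu.1, hcu.2, hCu, hfr, hunb, hunif, hcont, hpos, hharm, hzero⟩
  have hc1 := S.c1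
  set s := r / (2 * Cu) with hs
  have hs0 : 0 < s := by positivity
  have hrs : r = 2 * Cu * s := by rw [hs]; field_simp
  obtain ⟨z, hz, hxz, hdz⟩ := S.corkscrew hx hs0
  have hcs : 0 < cu * s := by positivity
  have hup := hB U h S x hx s hs0 z hz hxz.le hdz
  have hz0 := hpos z hz
  have hsub : ∀ R : ℝ, {y | y ∈ U ∧ innerDist U x y < ENNReal.ofReal R} ⊆ U ∩ ball x R := by
    rintro R y ⟨hy, hxy⟩
    refine ⟨hy, ?_⟩
    have h1 := (innerDist_ge x y).trans_lt hxy
    rw [edist_dist, ENNReal.ofReal_lt_ofReal_iff_of_nonneg dist_nonneg] at h1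
    rwa [mem_ball, dist_comm]
  have hUm : ∀ R : ℝ, MeasurableSet (U ∩ ball x R) := fun R =>
    (hunif.1.inter isOpen_ball).measurableSet
  have hfin : volume (U ∩ ball x (2 * r)) ≠ ⊤ :=
    ((measure_mono inter_subset_right).trans_lt measure_ball_lt_top).ne
  have hbd : ∀ y ∈ U ∩ ball x (2 * r), (h y) ^ 2 ≤ (B * h z) ^ 2 := by
    rintro y ⟨hy, hxy⟩
    refine pow_le_pow_left₀ (hpos y hy).le (hup y hy ?_) 2
    rw [mem_ball, dist_comm] at hxy
    rw [hrs] at hxy; linarith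
  have hInt : IntegrableOn (fun y => (h y) ^ 2) (U ∩ ball x (2 * r)) := by
    refine IntegrableOn.of_bound hfin.lt_top ?_ ((B * h z) ^ 2) ?_
    · exact ((hcont.mono (inter_subset_left.trans subset_closure)).pow 2).aestronglyMeasurable
        (hUm _)
    · refine (ae_restrict_iff' (hUm _)).2 (Filter.Eventually.of_forall fun y hy => ?_)
      rw [Real.norm_eq_abs, abs_of_nonneg (sq_nonneg _)]
      exact hbd y hy
  have hnn : ∀ t : Set (En n), 0 ≤ᵐ[volume.restrict t] fun y => (h y) ^ 2 := fun t =>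
    Filter.Eventually.of_forall fun y => sq_nonneg _
  have h1 : ∫ y in {y | y ∈ U ∧ innerDist U x y < ENNReal.ofReal (2 * r)}, (h y)^2 ≤
      (B * h z) ^ 2 * volume.real (ball x (2 * r)) := by
    calc _ ≤ ∫ y in U ∩ ball x (2 * r), (h y) ^ 2 :=
          setIntegral_mono_set hInt (hnn _) (hsub _).eventuallyLE
      _ ≤ ∫ y in U ∩ ball x (2 * r), (B * h z) ^ 2 :=
          setIntegral_mono_on hInt (integrableOn_const hfin) (hUm _) hbd
      _ = volume.real (U ∩ ball x (2 * r)) * (B * h z) ^ 2 := by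
          rw [setIntegral_const, smul_eq_mul]
      _ ≤ _ := by
          rw [mul_comm]
          apply mul_le_mul_of_nonneg_left _ (sq_nonneg _)
          exact measureReal_mono inter_subset_right measure_ball_lt_top.ne
  have hzU : ball z (cu * s) ⊆ U := S.ball_sub hz hdz
  have hzsub : ball z (cu * s / 8) ⊆ {y | y ∈ U ∧ innerDist U x y < ENNReal.ofReal r} := by
    intro w hw
    have hwU : w ∈ U := hzU (ball_subset_ball (by linarith) hw)
    refine ⟨hwU, ?_⟩
    obtain ⟨γ, hγ, hlen, -⟩ := hunif.2.2 x hx w hwU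
    refine lt_of_le_of_lt ((iInf₂_le γ hγ).trans hlen) ?_
    rw [ENNReal.ofReal_lt_ofReal_iff hr]
    rw [mem_ball, dist_comm] at hw
    have h2 := dist_triangle x z w
    rw [hrs]
    nlinarith
  have hlow : ∀ w ∈ ball z (cu * s / 8), (h z / (4 * 3 ^ n)) ^ 2 ≤ (h w) ^ 2 := by
    intro w hw
    refine pow_le_pow_left₀ (by positivity) ?_ 2
    rw [div_le_iff₀ (by positivity), mul_comm]
    rw [mem_ball] at hw
    refine S.harnack (r := cu * s / 8) (by positivity) ?_ (by rw [dist_comm]; exact hw.le)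
    refine Subset.trans (ball_subset_ball' ?_) hzU
    linarith
  have hInt2 : IntegrableOn (fun y => (h y) ^ 2)
      {y | y ∈ U ∧ innerDist U x y < ENNReal.ofReal r} :=
    hInt.mono_set ((hsub r).trans (inter_subset_inter_right _ (ball_subset_ball (by linarith))))
  have h2 : (h z / (4 * 3 ^ n)) ^ 2 * volume.real (ball z (cu * s / 8)) ≤
      ∫ y in {y | y ∈ U ∧ innerDist U x y < ENNReal.ofReal r}, (h y)^2 := by
    calc _ = ∫ y in ball z (cu * s / 8), (h z / (4 * 3 ^ n)) ^ 2 := by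
          rw [setIntegral_const, smul_eq_mul, mul_comm]
      _ ≤ ∫ y in ball z (cu * s / 8), (h y) ^ 2 :=
          setIntegral_mono_on (integrableOn_const measure_ball_lt_top.ne)
            (hInt2.mono_set hzsub) measurableSet_ball hlow
      _ ≤ _ := setIntegral_mono_set hInt2 (hnn _) hzsub.eventuallyLE
  have hv1 : volume.real (ball x (2 * r)) = (2 * r) ^ n * volume.real (ball (0 : En n) 1) := by
    rw [measureReal_def, Measure.addHaar_ball_of_pos _ _ (by positivity), ENNReal.toReal_mul,
      ENNReal.toReal_ofReal (by positivity), finrank_euclideanSpace, Fintype.card_fin,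
      measureReal_def]
  have hv2 : volume.real (ball z (cu * s / 8)) =
      (cu * s / 8) ^ n * volume.real (ball (0 : En n) 1) := by
    rw [measureReal_def, Measure.addHaar_ball_of_pos _ _ (by positivity), ENNReal.toReal_mul,
      ENNReal.toReal_ofReal (by positivity), finrank_euclideanSpace, Fintype.card_fin,
      measureReal_def]
  refine h1.trans (le_trans (le_of_eq ?_)
    (mul_le_mul_of_nonneg_left h2 (by positivity)))
  rw [hv1, hv2]
  have h3 : (2 * r) ^ n = (32 * Cu / cu) ^ n * (cu * s / 8) ^ n := by
    rw [← mul_pow]; congr 1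
    rw [hrs]; field_simp; ring
  rw [h3]
  field_simp
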